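/- arXiv:1903.11968 — 2 statements merged into one kernel-verified Lean document; each statement's English description precedes it below -/
import Mathlib

section
/- Let 0 ≤ j < j' < 2^n. Then L(E_1(j) + E_1(j')) = 2^n - 2^{ν_2(j' - j)}, where ν_2(m) denotes the largest integer t such that 2^t divides m (the 2-adic valuation). -/
/-- Generating polynomial `S^N(x) = s_0 + s_1 x + ... + s_{N-1} x^{N-1}` of one period
of an `N`-periodic binary sequence. -/
noncomputable def genPoly {N : ℕ} (S : Fin N → ZMod 2) : Polynomial (ZMod 2) :=
  ∑ i : Fin N, Polynomial.C (S i) * Polynomial.X ^ (i : ℕ)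

/-- Linear complexity `L(S) = N - deg (gcd (1 - x^N, S^N(x)))`. -/
noncomputable def linComp {N : ℕ} (S : Fin N → ZMod 2) : ℕ :=
  N - (EuclideanDomain.gcd (1 - Polynomial.X ^ N) (genPoly S)).natDegree

/-- Hamming weight of one period of an `N`-periodic binary sequence. -/
def wt {N : ℕ} (T : Fin N → ZMod 2) : ℕ :=
  (Finset.univ.filter (fun i => T i ≠ 0)).card

/-- `k`-error linear complexity `L_{N,k}(S)`. -/
noncomputable def errLC {N : ℕ} (S : Fin N → ZMod 2) (k : ℕ) : ℕ :=
  sInf {c | ∃ T : Fin N → ZMod 2, wt T ≤ k ∧ linComp (S + T) = c}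

/-- `k`-error linear complexity with a zone of length `Z`: `L_{N,k;Z}(S)`. -/
noncomputable def errLCZone {N : ℕ} (S : Fin N → ZMod 2) (k Z : ℕ) : ℕ :=
  sInf {c | ∃ T : Fin N → ZMod 2, wt T ≤ k ∧ (∀ i : Fin N, Z ≤ (i : ℕ) → T i = 0) ∧
    linComp (S + T) = c}

/-- `E_1(j)`: the sequence whose only nonzero term in one period is a `1` at position `j`. -/
def E1 {N : ℕ} (j : Fin N) : Fin N → ZMod 2 :=
  fun i => if i = j then 1 else 0

/-!
Modulo any `d` dividing `1 - x ^ N` the element `x` is invertible, so `d` divides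
`x ^ j - x ^ j'` exactly when `x ^ (j' - j) = 1` modulo `d`. Hence the common divisors of
`1 - X ^ N` and the generating polynomial `X ^ j + X ^ j'` are the divisors of `1 - X ^ g` with
`g = gcd (N, j' - j)`, and the linear complexity is `N - g` for every period `N`. When `N = 2 ^ n`,
the bound `0 < j' - j < 2 ^ n` makes `g` the largest power of `2` dividing `j' - j`.
-/

section CommRing

variable {R : Type*} [CommRing R]

theorem dvd_one_sub_pow_gcd_iff {d x : R} {m n : ℕ} :
    d ∣ 1 - x ^ m.gcd n ↔ d ∣ 1 - x ^ m ∧ d ∣ 1 - x ^ n := by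
  have dvd_iff_pow_eq_one (k : ℕ) :
      d ∣ 1 - x ^ k ↔ Ideal.Quotient.mk (Ideal.span {d}) x ^ k = 1 := by
    rw [← Ideal.Quotient.eq_zero_iff_dvd, map_sub, map_one, map_pow, sub_eq_zero, eq_comm]
  simp only [dvd_iff_pow_eq_one, pow_gcd_eq_one]

theorem isCoprime_one_sub_pow_self (x : R) {n : ℕ} (hn : n ≠ 0) : IsCoprime (1 - x ^ n) x :=
  ⟨1, x ^ (n - 1), by rw [one_mul, pow_sub_one_mul hn, sub_add_cancel]⟩

theorem dvd_pow_sub_pow_iff_of_dvd_one_sub_pow {d x : R} {i j n : ℕ} (hn : n ≠ 0) (hij : i ≤ j)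
    (hd : d ∣ 1 - x ^ n) : d ∣ x ^ i - x ^ j ↔ d ∣ 1 - x ^ (j - i) := by
  have coprime : IsCoprime d (x ^ i) :=
    ((isCoprime_one_sub_pow_self x hn).of_isCoprime_of_dvd_left hd).pow_right
  have factor : x ^ i - x ^ j = x ^ i * (1 - x ^ (j - i)) := by
    rw [mul_sub, mul_one, pow_mul_pow_sub x hij]
  rw [factor]
  exact ⟨coprime.dvd_of_dvd_mul_left, fun h => h.mul_left _⟩

end CommRing

theorem associated_gcd_one_sub_pow_pow_sub_pow {R : Type*} [EuclideanDomain R] [DecidableEq R]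
    (x : R) {i j n : ℕ} (hn : n ≠ 0) (hij : i ≤ j) :
    Associated (EuclideanDomain.gcd (1 - x ^ n) (x ^ i - x ^ j)) (1 - x ^ n.gcd (j - i)) := by
  have dvd_iff {d : R} : d ∣ 1 - x ^ n.gcd (j - i) ↔ d ∣ 1 - x ^ n ∧ d ∣ x ^ i - x ^ j := by
    rw [dvd_one_sub_pow_gcd_iff]
    exact and_congr_right fun hd => (dvd_pow_sub_pow_iff_of_dvd_one_sub_pow hn hij hd).symm
  obtain ⟨hleft, hright⟩ := dvd_iff.mp (dvd_refl (1 - x ^ n.gcd (j - i)))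
  exact associated_of_dvd_dvd
    (dvd_iff.mpr ⟨EuclideanDomain.gcd_dvd_left _ _, EuclideanDomain.gcd_dvd_right _ _⟩)
    (EuclideanDomain.dvd_gcd hleft hright)

open Polynomial in
theorem natDegree_one_sub_X_pow {R : Type*} [Ring R] [Nontrivial R] (n : ℕ) :
    (1 - X ^ n : R[X]).natDegree = n := by
  rw [natDegree_sub, ← C_1, natDegree_X_pow_sub_C]

theorem gcd_prime_pow_eq_pow_min_padicValNat {p : ℕ} [Fact p.Prime] (n : ℕ) {m : ℕ} (hm : m ≠ 0) :
    (p ^ n).gcd m = p ^ min n (padicValNat p m) := by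
  have hp : p.Prime := Fact.out
  obtain ⟨k, hkn, hk⟩ := (Nat.dvd_prime_pow hp).mp (Nat.gcd_dvd_left (p ^ n) m)
  rw [hk]
  congr 1
  apply le_antisymm
  · exact le_min hkn ((padicValNat_dvd_iff_le hm).mp (hk ▸ Nat.gcd_dvd_right _ _))
  · rw [← Nat.pow_dvd_pow_iff_le_right hp.one_lt, ← hk]
    exact Nat.dvd_gcd (pow_dvd_pow p (min_le_left _ _))
      ((padicValNat_dvd_iff_le hm).mpr (min_le_right _ _))

theorem genPoly_add {N : ℕ} (S T : Fin N → ZMod 2) :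
    genPoly (S + T) = genPoly S + genPoly T := by
  simp only [genPoly, Pi.add_apply, map_add, add_mul, Finset.sum_add_distrib]

theorem genPoly_E1 {N : ℕ} (j : Fin N) : genPoly (E1 j) = Polynomial.X ^ (j : ℕ) := by
  simp [genPoly, E1, apply_ite Polynomial.C]

open Polynomial in
theorem stmt3_general {N : ℕ} (j j' : Fin N) (h : (j : ℕ) ≤ (j' : ℕ)) :
    linComp (E1 j + E1 j') = N - N.gcd ((j' : ℕ) - (j : ℕ)) := by
  have hgen : genPoly (E1 j + E1 j') = X ^ (j : ℕ) - X ^ (j' : ℕ) := by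
    rw [genPoly_add, genPoly_E1, genPoly_E1, CharTwo.sub_eq_add]
  have hgcd := associated_gcd_one_sub_pow_pow_sub_pow (X : (ZMod 2)[X]) j.pos.ne' h
  rw [linComp, hgen, natDegree_eq_of_degree_eq (degree_eq_degree_of_associated hgcd),
    natDegree_one_sub_X_pow]

/-- For `0 ≤ j < j' < 2^n`, `L(E_1(j) + E_1(j')) = 2^n - 2^{ν_2(j'-j)}`. -/
theorem stmt3 (n : ℕ) (j j' : Fin (2^n)) (h : (j : ℕ) < (j' : ℕ)) :
    linComp (E1 j + E1 j') = 2^n - 2^(padicValNat 2 ((j' : ℕ) - (j : ℕ))) := by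
  have hm : (j' : ℕ) - (j : ℕ) ≠ 0 := Nat.sub_ne_zero_of_lt h
  have hval : padicValNat 2 ((j' : ℕ) - (j : ℕ)) ≤ n :=
    (Nat.pow_le_pow_iff_right one_lt_two).mp <|
      (Nat.le_of_dvd (Nat.pos_of_ne_zero hm) pow_padicValNat_dvd).trans <|
        (Nat.sub_le _ _).trans j'.isLt.le
  rw [stmt3_general j j' h.le, gcd_prime_pow_eq_pow_min_padicValNat n hm, min_eq_right hval]
end

section
/- Let S be a 2^n-periodic binary sequence with L(S) = 2^n, and suppose that 2^n - 2^s < L_1(S) < 2^n - 2^{s-1} for some integer s with 1 ≤ s ≤ n. Then there is exactly one position j with 0 ≤ j < 2^s such that L(S + E_1(j)) = L_1(S). -/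
/-!
Over `F_2` we have `1 - x^(2^n) = (1 - x)^(2^n)`, so `L(S) ≤ c` means that `(x - 1)^(2^n - c)`
divides `S^N(x)`. Since `L_1(S) < L(S)`, the minimum `c = L_1(S)` is attained at some `S + E_1(i)`,
and another position `j` attains it too exactly when `(x - 1)^(2^n - c)` divides `x^i - x^j`. The
multiplicity of the root `1` in `x^d - 1` is the largest power of `2` dividing `d`, and
`2^(s-1) < 2^n - c < 2^s`, so this happens exactly when `i ≡ j` modulo `2^s`. Each residue class
modulo `2^s` has one representative in `[0, 2^s)`.
-/

open Polynomial

section LinearFactorMultiplicity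

variable {R : Type*} [CommRing R]

lemma X_sub_C_pow_dvd_iff_le_natDegree [IsDomain R] {a : R} {g : R[X]} {N : ℕ}
    (hg : g ∣ (X - C a) ^ N) (m : ℕ) : (X - C a) ^ m ∣ g ↔ m ≤ g.natDegree := by
  obtain ⟨k, -, hgk⟩ := (dvd_prime_pow (prime_X_sub_C a) N).1 hg
  have hdeg : g.natDegree = k := by
    rw [natDegree_eq_of_degree_eq (degree_eq_degree_of_associated hgk), natDegree_pow,
      natDegree_X_sub_C, mul_one]
  rw [hgk.dvd_iff_dvd_right, pow_dvd_pow_iff (X_sub_C_ne_zero a) (not_isUnit_X_sub_C a), hdeg]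

lemma le_natDegree_gcd_X_sub_C_pow_iff {K : Type*} [Field K] [DecidableEq K[X]] (a : K) (f : K[X])
    {m N : ℕ} (hm : m ≤ N) :
    m ≤ (EuclideanDomain.gcd ((X - C a) ^ N) f).natDegree ↔ (X - C a) ^ m ∣ f := by
  have hleft := EuclideanDomain.gcd_dvd_left ((X - C a) ^ N) f
  have hright := EuclideanDomain.gcd_dvd_right ((X - C a) ^ N) f
  rw [← X_sub_C_pow_dvd_iff_le_natDegree hleft]
  exact ⟨fun h => h.trans hright, EuclideanDomain.dvd_gcd (pow_dvd_pow _ hm)⟩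

variable (p : ℕ) [Fact p.Prime] [CharP R p]

lemma X_sub_one_pow_dvd_X_pow_sub_one_iff_of_not_dvd {u : ℕ} (hu : ¬ p ∣ u) (v m : ℕ) :
    (X - 1 : R[X]) ^ m ∣ X ^ (p ^ v * u) - 1 ↔ m ≤ p ^ v := by
  set G : R[X] := (∑ i ∈ Finset.range u, X ^ i) ^ p ^ v with hG
  have hfactor : (X ^ (p ^ v * u) - 1 : R[X]) = (X - 1) ^ p ^ v * G := by
    rw [hG, ← mul_pow, mul_geom_sum, sub_pow_char_pow, one_pow, ← pow_mul, mul_comm u]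
  have hG_not_dvd : ¬ (X - 1 : R[X]) ∣ G := by
    rw [← C_1, dvd_iff_isRoot, IsRoot.def, hG, eval_pow, eval_geom_sum]
    simp only [one_pow, Finset.sum_const, Finset.card_range, nsmul_one]
    rw [← Nat.cast_pow, CharP.cast_eq_zero_iff R p]
    exact fun h => hu ((Fact.out : p.Prime).dvd_of_dvd_pow h)
  have hregular : IsLeftRegular ((X - 1 : R[X]) ^ p ^ v) := by
    simpa using ((monic_X_sub_C (1 : R)).pow (p ^ v)).isRegular.left
  rw [hfactor]
  refine ⟨fun h => ?_, fun h => (pow_dvd_pow _ h).mul_right G⟩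
  by_contra! hlt
  have hsucc := (pow_dvd_pow _ (Nat.succ_le_of_lt hlt)).trans h
  rw [Nat.succ_eq_add_one, pow_succ] at hsucc
  exact hG_not_dvd (hregular.dvd_cancel_left.1 hsucc)

lemma X_sub_one_pow_dvd_X_pow_sub_one_iff (m d : ℕ) :
    (X - 1 : R[X]) ^ m ∣ X ^ d - 1 ↔ p ^ Nat.clog p m ∣ d := by
  have hp : p.Prime := Fact.out
  rcases eq_or_ne d 0 with rfl | hd
  · simp
  obtain ⟨v, u, hu, rfl⟩ := Nat.exists_eq_pow_mul_and_not_dvd hd p hp.ne_one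
  have hcoprime : (p ^ Nat.clog p m).Coprime u := ((hp.coprime_iff_not_dvd).2 hu).pow_left _
  rw [X_sub_one_pow_dvd_X_pow_sub_one_iff_of_not_dvd p hu, hcoprime.dvd_mul_right,
    Nat.pow_dvd_pow_iff_le_right hp.one_lt, Nat.clog_le_iff_le_pow hp.one_lt]

lemma X_sub_one_pow_dvd_X_pow_sub_X_pow_iff (m i j : ℕ) :
    (X - 1 : R[X]) ^ m ∣ X ^ i - X ^ j ↔ i ≡ j [MOD p ^ Nat.clog p m] := by
  wlog hij : j ≤ i generalizing i j
  · rw [dvd_sub_comm, this j i (le_of_not_ge hij), Nat.ModEq.comm]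
  have hcoprime : IsCoprime ((X - 1 : R[X]) ^ m) (X ^ j) :=
    IsCoprime.pow ⟨-1, 1, by ring⟩
  calc (X - 1 : R[X]) ^ m ∣ X ^ i - X ^ j
    _ ↔ (X - 1 : R[X]) ^ m ∣ X ^ j * (X ^ (i - j) - 1) := by
      rw [mul_sub, ← pow_add, Nat.add_sub_of_le hij, mul_one]
    _ ↔ (X - 1 : R[X]) ^ m ∣ X ^ (i - j) - 1 :=
      ⟨hcoprime.dvd_of_dvd_mul_left, fun h => h.mul_left _⟩
    _ ↔ p ^ Nat.clog p m ∣ i - j := X_sub_one_pow_dvd_X_pow_sub_one_iff p m (i - j)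
    _ ↔ i ≡ j [MOD p ^ Nat.clog p m] := by rw [← Nat.modEq_iff_dvd' hij, Nat.ModEq.comm]

end LinearFactorMultiplicity

lemma existsUnique_fin_lt_and_modEq {q N : ℕ} (hq : 0 < q) (hqN : q ≤ N) (i : ℕ) :
    ∃! j : Fin N, (j : ℕ) < q ∧ i ≡ j [MOD q] := by
  have hlt : i % q < q := Nat.mod_lt i hq
  refine ⟨⟨i % q, hlt.trans_le hqN⟩, ⟨hlt, (Nat.mod_modEq i q).symm⟩, ?_⟩
  rintro j ⟨hj, hij⟩
  exact Fin.ext (((Nat.mod_modEq i q).trans hij).eq_of_lt_of_lt hlt hj).symm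

section Sequences

variable {N : ℕ}

lemma genPoly_add_E1 (S : Fin N → ZMod 2) (j : Fin N) :
    genPoly (S + E1 j) = genPoly S + X ^ (j : ℕ) := by
  simp [genPoly, E1, add_mul, Finset.sum_add_distrib]

lemma wt_zero : wt (0 : Fin N → ZMod 2) = 0 := by
  simp [wt]

lemma wt_E1 (j : Fin N) : wt (E1 j) = 1 := by
  simp [wt, E1, Finset.filter_eq']

lemma eq_zero_or_eq_E1_of_wt_le_one {T : Fin N → ZMod 2} (hT : wt T ≤ 1) :
    T = 0 ∨ ∃ j, T = E1 j := by
  refine or_iff_not_imp_left.2 fun hT0 => ?_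
  obtain ⟨j, hj⟩ := Function.ne_iff.1 hT0
  refine ⟨j, funext fun i => ?_⟩
  by_cases hij : i = j
  · subst hij
    exact (Fin.eq_one_of_ne_zero (T i) hj).trans (if_pos rfl).symm
  · have hi : T i = 0 := by
      by_contra hi
      exact hij (Finset.card_le_one.1 hT i (by simpa using hi) j (by simpa using hj))
    simp [E1, hij, hi]

lemma errLC_le_linComp_add {T : Fin N → ZMod 2} {k : ℕ} (S : Fin N → ZMod 2) (hT : wt T ≤ k) :
    errLC S k ≤ linComp (S + T) :=
  Nat.sInf_le ⟨T, hT, rfl⟩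

lemma exists_linComp_add_eq_errLC (S : Fin N → ZMod 2) (k : ℕ) :
    ∃ T, wt T ≤ k ∧ linComp (S + T) = errLC S k :=
  Nat.sInf_mem (s := {c | ∃ T : Fin N → ZMod 2, wt T ≤ k ∧ linComp (S + T) = c})
    ⟨_, 0, wt_zero.trans_le k.zero_le, rfl⟩

lemma exists_linComp_add_E1_eq_errLC_one {S : Fin N → ZMod 2} (h : errLC S 1 < linComp S) :
    ∃ i, linComp (S + E1 i) = errLC S 1 := by
  obtain ⟨T, hT, hmin⟩ := exists_linComp_add_eq_errLC S 1
  rcases eq_zero_or_eq_E1_of_wt_le_one hT with rfl | ⟨i, rfl⟩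
  · rw [add_zero] at hmin
    exact absurd hmin h.ne'
  · exact ⟨i, hmin⟩

end Sequences

section PowerOfTwoPeriod

variable {n : ℕ} (S : Fin (2 ^ n) → ZMod 2)

lemma linComp_le_iff (c : ℕ) :
    linComp S ≤ c ↔ (X - 1) ^ (2 ^ n - c) ∣ genPoly S := by
  have hperiod : (1 - X ^ 2 ^ n : (ZMod 2)[X]) = (X - 1) ^ 2 ^ n := by
    rw [sub_pow_char_pow, one_pow, CharTwo.sub_eq_add, CharTwo.sub_eq_add, add_comm]
  rw [linComp, hperiod, tsub_le_iff_tsub_le, ← C_1,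
    le_natDegree_gcd_X_sub_C_pow_iff 1 (genPoly S) (Nat.sub_le _ c)]

lemma linComp_add_E1_le_iff_modEq {c : ℕ} {i : Fin (2 ^ n)} (hi : linComp (S + E1 i) ≤ c)
    (j : Fin (2 ^ n)) :
    linComp (S + E1 j) ≤ c ↔ i ≡ j [MOD 2 ^ Nat.clog 2 (2 ^ n - c)] := by
  rw [linComp_le_iff] at hi ⊢
  have hdiff : genPoly (S + E1 i) - genPoly (S + E1 j) = X ^ (i : ℕ) - X ^ (j : ℕ) := by
    rw [genPoly_add_E1, genPoly_add_E1, add_sub_add_left_eq_sub]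
  rw [← dvd_sub_right hi, hdiff, X_sub_one_pow_dvd_X_pow_sub_X_pow_iff 2]

end PowerOfTwoPeriod

/-- If `L(S) = 2^n` and `2^n - 2^s < L_1(S) < 2^n - 2^{s-1}`, then there is exactly
one position `j` with `0 ≤ j < 2^s` such that `L(S + E_1(j)) = L_1(S)`. -/
theorem stmt5 (n s : ℕ) (hs1 : 1 ≤ s) (hsn : s ≤ n)
    (S : Fin (2^n) → ZMod 2) (hL : linComp S = 2^n)
    (h1 : 2^n - 2^s < errLC S 1) (h2 : errLC S 1 < 2^n - 2^(s-1)) :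
    ∃! j : Fin (2^n), (j : ℕ) < 2^s ∧ linComp (S + E1 j) = errLC S 1 := by
  have hlt : errLC S 1 < linComp S := (h2.trans_le (Nat.sub_le _ _)).trans_eq hL.symm
  obtain ⟨i, hi⟩ := exists_linComp_add_E1_eq_errLC_one hlt
  have hclog : Nat.clog 2 (2 ^ n - errLC S 1) = s := le_antisymm
    ((Nat.clog_le_iff_le_pow one_lt_two).2 (tsub_le_iff_tsub_le.1 h1.le))
    (Nat.le_of_pred_lt ((Nat.lt_clog_iff_pow_lt one_lt_two).2 (lt_tsub_comm.1 h2)))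
  have hattained (j : Fin (2 ^ n)) : linComp (S + E1 j) = errLC S 1 ↔ i ≡ j [MOD 2 ^ s] := by
    rw [← (errLC_le_linComp_add S (wt_E1 j).le).ge_iff_eq',
      linComp_add_E1_le_iff_modEq S hi.le, hclog]
  simp only [hattained]
  exact existsUnique_fin_lt_and_modEq (by positivity) (Nat.pow_le_pow_right two_pos hsn) i
end
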